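/- Fix integers n ≥ 2 and p ≥ 1, and let A_{ij} ∈ M_p be given for all 1 ≤ i, j ≤ n. Then the following are equivalent: (i) for every r ≥ 1 and all unitary matrices W_1, …, W_n ∈ M_r, the matrix Σ_{i,j=1}^n (W_i W_j^*) ⊗ A_{ij} is positive semidefinite in M_{rp}; (ii) there exist matrices X_{ik} ∈ M_p (1 ≤ i, k ≤ n) such that for every r ≥ 1 and all unitary matrices W_1, …, W_n ∈ M_r, one has Σ_{i,j=1}^n (W_i W_j^*) ⊗ A_{ij} = Σ_{k=1}^n Y_k Y_k^*, where Y_k = Σ_{i=1}^n W_i ⊗ X_{ik}. -/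

import Mathlib

open Kronecker ComplexOrder Matrix

/-!
The implication from the factorization to positivity is immediate. For the converse, view `A` as a
single `np × np` matrix. As `W_i W_i^* = 1`, the element `P = ∑ W_i W_j^* ⊗ A_{ij}` does not change
when a block diagonal matrix with diagonal blocks `D_i`, `∑ D_i = 0`, is added to `A`. If some such
modification is positive semidefinite, hence of the form `B B^*`, then the blocks `X_{ik} = B_{ik}`
give the factorization (`mul_conjTranspose_sum`, `sum_kronecker_block_eq_zero`).

So it suffices to show that the Hermitian part of `A` lies in the cone `liftCone` of matrices that
are positive semidefinite modulo the subspace `diagNull` of these block diagonal matrices; passing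
to the Hermitian part leaves `P` alone because `P` is self-adjoint. This cone is convex, and it is
closed because the trace vanishes on `diagNull` and controls the size of `B`. By Hahn–Banach
(`mem_liftCone_of_forall`), membership only has to be tested against positive semidefinite `Q` whose
diagonal blocks all coincide. Writing `Q = G^* G`, the block columns `G_i` satisfy
`G_i^* G_i = G_0^* G_0`, so `G_i = U_i G_0` for unitaries `U_i` (`exists_unitary_mul_eq`). The
pairing of `A` with `Q` is then `⟨P ξ, ξ⟩` for `W_i = U_i^*`, with `ξ` the vector of entries of
`G_0`, and this is nonnegative by hypothesis.
-/

/-! ### Gram matrices and unitaries -/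

/-- Two families of vectors with the same Gram matrix differ by a unitary: the isometry `H x ↦ G x`
on the range of `H` extends to the whole finite-dimensional space. -/
theorem exists_unitary_mul_eq {N p : ℕ} (G H : Matrix (Fin N) (Fin p) ℂ)
    (h : Gᴴ * G = Hᴴ * H) : ∃ U ∈ Matrix.unitaryGroup (Fin N) ℂ, G = U * H := by
  have norm_eq (x) : ‖toEuclideanLin H x‖ = ‖toEuclideanLin G x‖ := by
    have key (M : Matrix (Fin N) (Fin p) ℂ) :
        inner ℂ (toEuclideanLin M x) (toEuclideanLin M x)
          = inner ℂ (toEuclideanLin (Mᴴ * M) x) x := by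
      rw [Matrix.toEuclideanLin, ← LinearMap.adjoint_inner_left]
      rw [← Matrix.toEuclideanLin_conjTranspose_eq_adjoint]
      congr 1
      simp [Matrix.toLpLin_apply]
    have := (key H).trans ((congrArg (fun M => inner ℂ (toEuclideanLin M x) x) h.symm).trans
      (key G).symm)
    rw [inner_self_eq_norm_sq_to_K, inner_self_eq_norm_sq_to_K] at this
    have h2 : ‖toEuclideanLin H x‖ ^ 2 = ‖toEuclideanLin G x‖ ^ 2 := by exact_mod_cast this
    exact (sq_eq_sq₀ (norm_nonneg _) (norm_nonneg _)).1 h2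
  set g := toEuclideanLin G
  set f := toEuclideanLin H
  have hker : LinearMap.ker f ≤ LinearMap.ker g := fun x hx => by
    rw [LinearMap.mem_ker, ← norm_eq_zero] at hx ⊢
    rw [← norm_eq, hx]
  -- The well-defined linear map `H x ↦ G x` on the range of `H`.
  let L₀ : LinearMap.range f →ₗ[ℂ] EuclideanSpace ℂ (Fin N) :=
    (LinearMap.ker f).liftQ g hker ∘ₗ f.quotKerEquivRange.symm.toLinearMap
  have hL₀ (x) : L₀ ⟨f x, x, rfl⟩ = g x := by
    have : f.quotKerEquivRange.symm ⟨f x, x, rfl⟩ = Submodule.Quotient.mk x := by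
      rw [LinearEquiv.symm_apply_eq]; rfl
    simp [L₀, this]
  let L : LinearMap.range f →ₗᵢ[ℂ] EuclideanSpace ℂ (Fin N) :=
    ⟨L₀, by rintro ⟨_, x, rfl⟩; rw [hL₀]; exact (norm_eq x).symm⟩
  have hext (x) : L.extend (f x) = g x := (L.extend_apply ⟨f x, x, rfl⟩).trans (hL₀ x)
  refine ⟨toEuclideanLin.symm L.extend.toLinearMap, ?_, ?_⟩
  · rw [Matrix.mem_unitaryGroup_iff', Matrix.star_eq_conjTranspose]
    apply toEuclideanLin.injective
    ext1 x
    refine ext_inner_right ℂ fun y => ?_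
    set U := toEuclideanLin.symm L.extend.toLinearMap with hU
    have hUx (x) : toEuclideanLin U x = L.extend x := by rw [hU, LinearEquiv.apply_symm_apply]; rfl
    have : toEuclideanLin (Uᴴ * U) x = toEuclideanLin Uᴴ (toEuclideanLin U x) := by
      simp [Matrix.toLpLin_apply]
    rw [this, Matrix.toEuclideanLin_conjTranspose_eq_adjoint, LinearMap.adjoint_inner_left,
      hUx, hUx, LinearIsometry.inner_map_map]
    simp
  · apply toEuclideanLin.injective
    ext1 x
    set U := toEuclideanLin.symm L.extend.toLinearMap with hU
    have hUx (x) : toEuclideanLin U x = L.extend x := by rw [hU, LinearEquiv.apply_symm_apply]; rfl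
    have : toEuclideanLin (U * H) x = toEuclideanLin U (toEuclideanLin H x) := by
      simp [Matrix.toLpLin_apply]
    rw [this, hUx]
    exact (hext x).symm

open scoped MatrixOrder in
theorem exists_gram {ι : Type*} [Fintype ι] [DecidableEq ι] {Q : Matrix ι ι ℂ}
    (hQ : Q.PosSemidef) : ∃ G : Matrix ι ι ℂ, Q = Gᴴ * G :=
  CStarAlgebra.nonneg_iff_eq_star_mul_self.1 hQ.nonneg

/-! ### The cone of matrices with a positive semidefinite lift -/

section
variable {ι κ : Type*} [Fintype ι] [Fintype κ]

/-- The subspace of block matrices, with blocks indexed by `ι` and entries of each block by `κ`, that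
are block diagonal with diagonal blocks summing to zero. -/
def diagNull (ι κ : Type*) [Fintype ι] : Submodule ℂ (Matrix (ι × κ) (ι × κ) ℂ) where
  carrier := {D | (∀ i j, i ≠ j → ∀ a b, D (i, a) (j, b) = 0) ∧
    ∀ a b, ∑ i, D (i, a) (i, b) = 0}
  add_mem' := by
    rintro D E ⟨h1, h2⟩ ⟨h3, h4⟩
    refine ⟨fun i j hij a b => ?_, fun a b => ?_⟩
    · simp [h1 i j hij, h3 i j hij]
    · simp [Finset.sum_add_distrib, h2, h4]
  zero_mem' := by simp
  smul_mem' := by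
    rintro c D ⟨h1, h2⟩
    refine ⟨fun i j hij a b => ?_, fun a b => ?_⟩
    · simp [h1 i j hij]
    · simp [← Finset.mul_sum, h2]

/-- The matrices that are positive semidefinite modulo `diagNull`. The positive semidefinite
representative is given in the form `B * Bᴴ`. -/
def liftCone (ι κ : Type*) [Fintype ι] [Fintype κ] : Set (Matrix (ι × κ) (ι × κ) ℂ) :=
  {x | ∃ B : Matrix (ι × κ) (ι × κ) ℂ, x - B * Bᴴ ∈ diagNull ι κ}

theorem trace_eq_zero_of_mem {D : Matrix (ι × κ) (ι × κ) ℂ} (hD : D ∈ diagNull ι κ) :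
    D.trace = 0 := by
  rw [Matrix.trace, Fintype.sum_prod_type_right]
  exact Finset.sum_eq_zero fun a _ => hD.2 a a

theorem convex_liftCone : Convex ℝ (liftCone ι κ) := by
  classical
  rintro x ⟨B, hB⟩ y ⟨C, hC⟩ s t hs ht -
  have hpos : (s • (B * Bᴴ) + t • (C * Cᴴ)).PosSemidef :=
    ((posSemidef_self_mul_conjTranspose B).smul hs).add
      ((posSemidef_self_mul_conjTranspose C).smul ht)
  obtain ⟨G, hG⟩ := exists_gram hpos
  refine ⟨Gᴴ, ?_⟩
  have : s • x + t • y - Gᴴ * Gᴴᴴ = (s : ℂ) • (x - B * Bᴴ) + (t : ℂ) • (y - C * Cᴴ) := by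
    rw [conjTranspose_conjTranspose, ← hG]
    simp only [Complex.coe_smul, smul_sub]
    abel
  rw [this]
  exact add_mem (Submodule.smul_mem _ _ hB) (Submodule.smul_mem _ _ hC)

theorem smul_mem_liftCone {x : Matrix (ι × κ) (ι × κ) ℂ} (hx : x ∈ liftCone ι κ) {s : ℝ}
    (hs : 0 ≤ s) : (s : ℂ) • x ∈ liftCone ι κ := by
  obtain ⟨B, hB⟩ := hx
  refine ⟨((√s : ℝ) : ℂ) • B, ?_⟩
  convert Submodule.smul_mem _ (s : ℂ) hB using 1
  rw [conjTranspose_smul, smul_mul_smul_comm, smul_sub]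
  congr 2
  rw [Complex.star_def, Complex.conj_ofReal, ← Complex.ofReal_mul, Real.mul_self_sqrt hs]

attribute [local instance] Matrix.normedAddCommGroup Matrix.normedSpace

/-- If `x m = B m * (B m)ᴴ` modulo `diagNull` and `x m` converges, then the squared Frobenius norm
of `B m` is the trace of `x m`, hence bounded, and a limit point of `B m` represents the limit. -/
theorem isClosed_liftCone : IsClosed (liftCone ι κ) := by
  have := FiniteDimensional.proper ℂ (Matrix (ι × κ) (ι × κ) ℂ)
  have : SequentialSpace (Matrix (ι × κ) (ι × κ) ℂ) :=
    inferInstanceAs (SequentialSpace (ι × κ → ι × κ → ℂ))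
  refine IsSeqClosed.isClosed fun x y hx hxy => ?_
  choose B hB using hx
  have htr (m : ℕ) : (x m).trace.re = ∑ I, ∑ J, ‖B m I J‖ ^ 2 := by
    have := trace_eq_zero_of_mem (hB m)
    rw [trace_sub, sub_eq_zero] at this
    rw [this, Matrix.trace, Complex.re_sum]
    refine Finset.sum_congr rfl fun I _ => ?_
    rw [diag_apply, mul_apply, Complex.re_sum]
    refine Finset.sum_congr rfl fun J _ => ?_
    rw [conjTranspose_apply, Complex.star_def, Complex.mul_conj, Complex.ofReal_re,
      Complex.normSq_eq_norm_sq]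
  have hcont : Continuous fun z : Matrix (ι × κ) (ι × κ) ℂ => z.trace.re := by fun_prop
  obtain ⟨R, hR⟩ := ((hcont.tendsto y).comp hxy).bddAbove_range
  have hbound (m : ℕ) : B m ∈ Metric.closedBall (0 : Matrix (ι × κ) (ι × κ) ℂ) √R := by
    rw [mem_closedBall_zero_iff, Matrix.norm_le_iff (Real.sqrt_nonneg _)]
    intro I J
    apply Real.le_sqrt_of_sq_le
    calc ‖B m I J‖ ^ 2 ≤ ∑ J, ‖B m I J‖ ^ 2 :=
          Finset.single_le_sum (f := fun J => ‖B m I J‖ ^ 2) (fun _ _ => by positivity)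
            (Finset.mem_univ J)
      _ ≤ ∑ I, ∑ J, ‖B m I J‖ ^ 2 :=
          Finset.single_le_sum (f := fun I => ∑ J, ‖B m I J‖ ^ 2) (fun _ _ => by positivity)
            (Finset.mem_univ I)
      _ ≤ R := (htr m).symm.trans_le (hR ⟨m, rfl⟩)
  obtain ⟨C, -, φ, hφ, hC⟩ := tendsto_subseq_of_bounded Metric.isBounded_closedBall hbound
  refine ⟨C, ?_⟩
  have hlim : Filter.Tendsto (fun m => x (φ m) - B (φ m) * (B (φ m))ᴴ) Filter.atTop
      (nhds (y - C * Cᴴ)) := by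
    have hc : Continuous fun z : Matrix (ι × κ) (ι × κ) ℂ => z * zᴴ := by fun_prop
    exact (hxy.comp hφ.tendsto_atTop).sub ((hc.tendsto C).comp hC)
  exact (diagNull ι κ).closed_of_finiteDimensional.mem_of_tendsto hlim
    (Filter.Eventually.of_forall fun m => hB (φ m))

/-- Duality: a Hermitian matrix lies in `liftCone` if it pairs nonnegatively with every positive
semidefinite matrix all of whose diagonal blocks are equal. -/
theorem mem_liftCone_of_forall [DecidableEq ι] [DecidableEq κ]
    {A : Matrix (ι × κ) (ι × κ) ℂ} (hA : A.IsHermitian)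
    (h : ∀ Q : Matrix (ι × κ) (ι × κ) ℂ, Q.PosSemidef →
      (∀ i j a b, Q (i, a) (i, b) = Q (j, a) (j, b)) → 0 ≤ (∑ I, ∑ J, A I J * Q I J).re) :
    A ∈ liftCone ι κ := by
  by_contra hAK
  have : LocallyConvexSpace ℝ (Matrix (ι × κ) (ι × κ) ℂ) :=
    inferInstanceAs (LocallyConvexSpace ℝ (ι × κ → ι × κ → ℂ))
  obtain ⟨f, u, hf, hu⟩ := RCLike.geometric_hahn_banach_closed_point (𝕜 := ℂ)
    convex_liftCone isClosed_liftCone hAK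
  simp only [RCLike.re_eq_complex_re] at hf hu
  have hnonpos (x) (hx : x ∈ liftCone ι κ) : (f x).re ≤ 0 := by
    by_contra! hpos
    have := hf _ (smul_mem_liftCone hx (s := |u| / (f x).re) (by positivity))
    rw [map_smul, smul_eq_mul, Complex.re_ofReal_mul, div_mul_cancel₀ _ hpos.ne'] at this
    exact (le_abs_self u).not_gt this
  have hnull (D) (hD : D ∈ diagNull ι κ) : f D = 0 := by
    have := hnonpos (star (f D) • D) ⟨0, by simpa using Submodule.smul_mem _ _ hD⟩
    rw [map_smul, smul_eq_mul, mul_comm, Complex.star_def, Complex.mul_conj,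
      Complex.ofReal_re] at this
    exact Complex.normSq_eq_zero.1 (this.antisymm (Complex.normSq_nonneg _))
  have hu0 : 0 < u := by simpa using hf 0 ⟨0, by simp⟩
  let E (I J : ι × κ) : Matrix (ι × κ) (ι × κ) ℂ := Matrix.single I J 1
  have hfsum (x) : f x = ∑ I, ∑ J, x I J * f (E I J) := by
    conv_lhs => rw [matrix_eq_sum_single x]
    simp only [map_sum]
    refine Finset.sum_congr rfl fun I _ => Finset.sum_congr rfl fun J _ => ?_
    rw [← smul_eq_mul, ← map_smul, smul_single, smul_eq_mul, mul_one]
  -- Minus the Hermitian part of the matrix representing `f`; on Hermitian matrices, pairing with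
  -- it gives minus the real part of `f`.
  let Q : Matrix (ι × κ) (ι × κ) ℂ :=
    Matrix.of fun I J => -(f (E I J) + star (f (E J I))) / 2
  have hQsum (x : Matrix (ι × κ) (ι × κ) ℂ) (hx : x.IsHermitian) :
      ∑ I, ∑ J, x I J * Q I J = ((-(f x).re : ℝ) : ℂ) := by
    have h1 : ∑ I, ∑ J, x I J * star (f (E J I)) = star (f x) := by
      rw [hfsum x, star_sum, Finset.sum_comm]
      refine Finset.sum_congr rfl fun I _ => ?_
      rw [star_sum]
      refine Finset.sum_congr rfl fun J _ => ?_
      rw [star_mul', hx.apply]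
    have h2 : ∑ I, ∑ J, x I J * Q I J = -(f x + star (f x)) / 2 := by
      rw [← h1, hfsum x, ← Finset.sum_add_distrib, ← Finset.sum_neg_distrib, Finset.sum_div]
      refine Finset.sum_congr rfl fun I _ => ?_
      rw [← Finset.sum_add_distrib, ← Finset.sum_neg_distrib, Finset.sum_div]
      refine Finset.sum_congr rfl fun J _ => ?_
      simp only [Q, of_apply]
      ring
    rw [h2, Complex.star_def, Complex.add_conj]
    push_cast
    ring
  have hQpos : Q.PosSemidef := by
    refine PosSemidef.of_dotProduct_mulVec_nonneg ?_ fun z => ?_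
    · ext I J
      simp [Q, add_comm]
    · have hz := posSemidef_vecMulVec_star_self z
      have : star z ⬝ᵥ Q *ᵥ z = ∑ I, ∑ J, vecMulVec (star z) z I J * Q I J := by
        simp only [dotProduct, mulVec, Finset.mul_sum, vecMulVec_apply]
        refine Finset.sum_congr rfl fun I _ => Finset.sum_congr rfl fun J _ => ?_
        ring
      rw [this, hQsum _ hz.isHermitian, Complex.zero_le_real, neg_nonneg]
      obtain ⟨G, hG⟩ := exists_gram hz
      exact hnonpos _ ⟨Gᴴ, by simp [hG]⟩
  have hEE (i j a b) : f (E (i, a) (i, b)) = f (E (j, a) (j, b)) := by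
    rw [← sub_eq_zero, ← map_sub]
    refine hnull _ ⟨fun k l hkl c d => ?_, fun c d => ?_⟩
    · simp only [E, Matrix.sub_apply, single_apply, Prod.mk.injEq]
      grind
    · simp [E, single_apply, ite_and]
  have := h Q hQpos fun i j a b => by simp only [Q, of_apply, hEE i j]
  rw [hQsum A hA, Complex.ofReal_re] at this
  linarith
end

/-! ### Block computations -/

section
variable {n p r : ℕ}

/-- The `(i, j)` block of a block matrix. -/
def block (M : Matrix (Fin n × Fin p) (Fin n × Fin p) ℂ) (i j : Fin n) :
    Matrix (Fin p) (Fin p) ℂ :=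
  M.submatrix (Prod.mk i) (Prod.mk j)

/-- The quadratic form of `M ⊗ C` at the vector whose entries are those of the matrix `Ξ`. -/
theorem dotProduct_kronecker_mulVec (M : Matrix (Fin r) (Fin r) ℂ)
    (C : Matrix (Fin p) (Fin p) ℂ) (Ξ : Matrix (Fin r) (Fin p) ℂ) :
    star (fun x : Fin r × Fin p => Ξ x.1 x.2) ⬝ᵥ (M ⊗ₖ C) *ᵥ (fun x => Ξ x.1 x.2) =
      ∑ a, ∑ b, C a b * (Ξᴴ * (M * Ξ)) a b := by
  simp only [dotProduct, mulVec, Fintype.sum_prod_type, mul_apply, Finset.mul_sum,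
    kroneckerMap_apply, conjTranspose_apply, Pi.star_apply]
  rw [Finset.sum_comm]
  refine Finset.sum_congr rfl fun a _ => ?_
  rw [Finset.sum_comm_cycle]
  refine Finset.sum_congr rfl fun b _ => Finset.sum_congr rfl fun s _ =>
    Finset.sum_congr rfl fun t _ => ?_
  ring

theorem mul_conjTranspose_sum (W : Fin n → Matrix (Fin r) (Fin r) ℂ)
    (B : Matrix (Fin n × Fin p) (Fin n × Fin p) ℂ) :
    ∑ k, (∑ i, W i ⊗ₖ block B i k) * (∑ i, W i ⊗ₖ block B i k)ᴴ =
      ∑ i, ∑ j, (W i * (W j)ᴴ) ⊗ₖ block (B * Bᴴ) i j := by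
  have hblock (i j) : block (B * Bᴴ) i j = ∑ k, block B i k * (block B j k)ᴴ := by
    ext a b
    simp [block, mul_apply, Fintype.sum_prod_type, Matrix.sum_apply]
  simp only [conjTranspose_sum, Finset.sum_mul_sum, conjTranspose_kronecker,
    ← mul_kronecker_mul, hblock]
  rw [Finset.sum_comm]
  refine Finset.sum_congr rfl fun i _ => ?_
  rw [Finset.sum_comm]
  refine Finset.sum_congr rfl fun j _ => ?_
  ext x y
  simp [Matrix.sum_apply, Finset.mul_sum]

theorem sum_kronecker_block_eq_zero {W : Fin n → Matrix (Fin r) (Fin r) ℂ}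
    (hW : ∀ i, W i ∈ Matrix.unitaryGroup (Fin r) ℂ)
    {D : Matrix (Fin n × Fin p) (Fin n × Fin p) ℂ} (hD : D ∈ diagNull (Fin n) (Fin p)) :
    ∑ i, ∑ j, (W i * (W j)ᴴ) ⊗ₖ block D i j = 0 := by
  have hoff (i j) (hij : i ≠ j) : block D i j = 0 := by
    ext a b
    exact hD.1 i j hij a b
  have hdiag (i) : ∑ j, (W i * (W j)ᴴ) ⊗ₖ block D i j = 1 ⊗ₖ block D i i := by
    rw [Finset.sum_eq_single i (fun j _ hj => by rw [hoff i j hj.symm, kronecker_zero])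
      (by simp), ← star_eq_conjTranspose, Matrix.mem_unitaryGroup_iff.1 (hW i)]
  ext ⟨s, a⟩ ⟨t, b⟩
  simp only [hdiag, Matrix.sum_apply, kroneckerMap_apply, ← Finset.mul_sum]
  have := hD.2 a b
  simp [block, this]

end

/-- Factorization of positive elements `∑ u_i u_j^* ⊗ A_{ij}` in `C*(F_n) ⊗ M_p`, rendered
via all finite-dimensional unitary tuples: `P` is positive for all unitary tuples iff there
exist `X_{ik} ∈ M_p` with `P = ∑_k Y_k Y_k^*`, `Y_k = ∑_i W_i ⊗ X_{ik}`, for all unitary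
tuples. -/
theorem positive_factorization_free_unitaries (n p : ℕ) (hn : 2 ≤ n) (hp : 1 ≤ p)
    (A : Fin n → Fin n → Matrix (Fin p) (Fin p) ℂ) :
    (∀ r : ℕ, 1 ≤ r → ∀ W : Fin n → Matrix (Fin r) (Fin r) ℂ,
      (∀ i, W i ∈ Matrix.unitaryGroup (Fin r) ℂ) →
      (∑ i : Fin n, ∑ j : Fin n, (W i * (W j)ᴴ) ⊗ₖ A i j).PosSemidef)
    ↔
    (∃ X : Fin n → Fin n → Matrix (Fin p) (Fin p) ℂ,
      ∀ r : ℕ, 1 ≤ r → ∀ W : Fin n → Matrix (Fin r) (Fin r) ℂ,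
        (∀ i, W i ∈ Matrix.unitaryGroup (Fin r) ℂ) →
        (∑ i : Fin n, ∑ j : Fin n, (W i * (W j)ᴴ) ⊗ₖ A i j) =
          ∑ k : Fin n,
            (∑ i : Fin n, W i ⊗ₖ X i k) * (∑ i : Fin n, W i ⊗ₖ X i k)ᴴ) := by
  constructor
  swap
  · rintro ⟨X, hX⟩ r hr W hW
    rw [hX r hr W hW]
    exact posSemidef_sum _ fun k _ => posSemidef_self_mul_conjTranspose _
  intro h
  -- The Hermitian part of `A`.
  let A' : Matrix (Fin n × Fin p) (Fin n × Fin p) ℂ :=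
    Matrix.of fun I J => (A I.1 J.1 I.2 J.2 + star (A J.1 I.1 J.2 I.2)) / 2
  have hA' : A'.IsHermitian := by
    ext I J
    simp [A', add_comm]
  have hblock (i j) : block A' i j = (1 / 2 : ℂ) • (A i j + (A j i)ᴴ) := by
    ext a b
    simp [A', block]
    ring
  have hsum (r : ℕ) (hr : 1 ≤ r) (W : Fin n → Matrix (Fin r) (Fin r) ℂ)
      (hW : ∀ i, W i ∈ Matrix.unitaryGroup (Fin r) ℂ) :
      ∑ i, ∑ j, (W i * (W j)ᴴ) ⊗ₖ block A' i j = ∑ i, ∑ j, (W i * (W j)ᴴ) ⊗ₖ A i j := by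
    set P := ∑ i, ∑ j, (W i * (W j)ᴴ) ⊗ₖ A i j with hP
    have hstar : ∑ i, ∑ j, (W i * (W j)ᴴ) ⊗ₖ (A j i)ᴴ = Pᴴ := by
      rw [hP, conjTranspose_sum, Finset.sum_comm]
      simp [conjTranspose_sum, conjTranspose_kronecker, conjTranspose_mul]
    simp only [hblock, kronecker_smul, kronecker_add, ← Finset.smul_sum,
      Finset.sum_add_distrib]
    rw [hstar, ← hP, (h r hr W hW).isHermitian.eq, ← two_smul ℂ, smul_smul]
    norm_num
  have hmem : A' ∈ liftCone (Fin n) (Fin p) := by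
    refine mem_liftCone_of_forall hA' fun Q hQ hdiag => ?_
    obtain ⟨G, hG⟩ := exists_gram hQ
    -- The block columns of `G`, with rows reindexed by `Fin (n * p)`.
    let g (i : Fin n) : Matrix (Fin (n * p)) (Fin p) ℂ :=
      G.submatrix finProdFinEquiv.symm (Prod.mk i)
    have hg (i j) : (g i)ᴴ * g j = block Q i j := by
      simp only [g, hG, block, conjTranspose_submatrix]
      rw [submatrix_mul_equiv]
    let i₀ : Fin n := ⟨0, by omega⟩
    have hU (i) : ∃ U ∈ Matrix.unitaryGroup (Fin (n * p)) ℂ, g i = U * g i₀ := by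
      apply exists_unitary_mul_eq
      rw [hg, hg]
      ext a b
      exact hdiag i i₀ a b
    choose U hU hgU using hU
    have hW (i) : (U i)ᴴ ∈ Matrix.unitaryGroup (Fin (n * p)) ℂ := Unitary.star_mem (hU i)
    have hr : 1 ≤ n * p := Nat.mul_pos (by omega) hp
    have hpos := (h _ hr _ hW).dotProduct_mulVec_nonneg fun x => g i₀ x.1 x.2
    rw [← hsum _ hr _ hW] at hpos
    have key (i j) : (g i₀)ᴴ * ((U i)ᴴ * (U j)ᴴᴴ * g i₀) = block Q i j := by
      rw [conjTranspose_conjTranspose, Matrix.mul_assoc, ← hgU j, ← Matrix.mul_assoc,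
        ← conjTranspose_mul, ← hgU i, hg]
    simp only [sum_mulVec, dotProduct_sum, dotProduct_kronecker_mulVec, key] at hpos
    refine (Complex.nonneg_iff.1 hpos).1.trans_eq (congrArg Complex.re ?_)
    simp only [Fintype.sum_prod_type, block, submatrix_apply]
    exact Finset.sum_congr rfl fun i _ => Finset.sum_comm
  obtain ⟨B, hB⟩ := hmem
  refine ⟨block B, fun r hr W hW => ?_⟩
  rw [mul_conjTranspose_sum, ← hsum r hr W hW, ← sub_eq_zero,
    ← sum_kronecker_block_eq_zero hW hB]
  simp only [← Finset.sum_sub_distrib]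
  refine Finset.sum_congr rfl fun i _ => Finset.sum_congr rfl fun j _ => ?_
  ext x y
  simp [block, mul_sub]
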